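/- Let R be a ring, R' an R-algebra (via a ring map R → R'), and M, N finitely presented R-modules such that there exist a module L and short exact sequences 0 → M → L → E → 0 and 0 → N → L → F → 0 with E ⊗_R R' = 0 = Tor₁^R(E, R') and F ⊗_R R' = 0 = Tor₁^R(F, R'). Then M ⊗_R R' ≅ N ⊗_R R' as R'-modules. -/

import Mathlib

open CategoryTheory TensorProduct

/-- `Tor₁^R(M, N)`, as an object of `ModuleCat R`. -/
noncomputable def tor1 (R : Type) [CommRing R] (M N : Type) [AddCommGroup M] [Module R M]
    [AddCommGroup N] [Module R N] : ModuleCat R :=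
  ((Tor (ModuleCat R) 1).obj (ModuleCat.of R M)).obj (ModuleCat.of R N)

/-- Diagram chase: injectivity of `M ⊗ Q → L ⊗ Q` from exactness of `E ⊗ P₂ → E ⊗ P₁ → E ⊗ P₀`. -/
theorem rTensor_inj_aux {R : Type} [CommRing R] {M L E Q P0 P1 P2 : Type}
    [AddCommGroup M] [Module R M] [AddCommGroup L] [Module R L] [AddCommGroup E] [Module R E]
    [AddCommGroup Q] [Module R Q] [AddCommGroup P0] [Module R P0] [AddCommGroup P1] [Module R P1]
    [AddCommGroup P2] [Module R P2] [Module.Flat R P0]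
    (i : M →ₗ[R] L) (p : L →ₗ[R] E) (hi : Function.Injective i) (hp : Function.Surjective p)
    (hip : Function.Exact i p)
    (d2 : P2 →ₗ[R] P1) (d1 : P1 →ₗ[R] P0) (e : P0 →ₗ[R] Q) (hd : d1 ∘ₗ d2 = 0)
    (he : Function.Surjective e) (hde : Function.Exact d1 e)
    (hT : Function.Exact (d2.lTensor E) (d1.lTensor E)) :
    Function.Injective (i.rTensor Q) := by
  have comm : ∀ {A B X Y : Type} [AddCommGroup A] [Module R A] [AddCommGroup B] [Module R B]
      [AddCommGroup X] [Module R X] [AddCommGroup Y] [Module R Y]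
      (f : A →ₗ[R] B) (g : X →ₗ[R] Y) (t : A ⊗[R] X),
      g.lTensor B (f.rTensor X t) = f.rTensor Y (g.lTensor A t) := by
    intro A B X Y _ _ _ _ _ _ _ _ f g t
    rw [← LinearMap.comp_apply, ← LinearMap.comp_apply, LinearMap.lTensor_comp_rTensor,
      LinearMap.rTensor_comp_lTensor]
  rw [injective_iff_map_eq_zero]
  intro x hx
  obtain ⟨y, rfl⟩ := LinearMap.lTensor_surjective M he x
  rw [← comm] at hx
  obtain ⟨z, hz⟩ := (lTensor_exact L hde he _).1 hx
  have h1 : d1.lTensor E (p.rTensor P1 z) = 0 := by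
    rw [comm, hz]
    exact (rTensor_exact P0 hip hp _).2 ⟨y, rfl⟩
  obtain ⟨w, hw⟩ := (hT _).1 h1
  obtain ⟨w', rfl⟩ := LinearMap.rTensor_surjective P2 hp w
  rw [comm] at hw
  have h2 : p.rTensor P1 (z - d2.lTensor L w') = 0 := by
    rw [map_sub, hw, sub_self]
  obtain ⟨v, hv⟩ := (rTensor_exact P1 hip hp _).1 h2
  have h3 : d1.lTensor L (d2.lTensor L w') = 0 := by
    rw [← LinearMap.comp_apply, ← LinearMap.lTensor_comp, hd, LinearMap.lTensor_zero,
      LinearMap.zero_apply]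
  have h4 : d1.lTensor M v = y := by
    apply Module.Flat.rTensor_preserves_injective_linearMap (M := P0) i hi
    rw [← comm, hv, map_sub, h3, sub_zero, hz]
  rw [← h4]
  exact (lTensor_exact M hde he _).2 ⟨v, rfl⟩

theorem rTensor_inj_of_tor1 {R : Type} [CommRing R] {M L E Q : Type}
    [AddCommGroup M] [Module R M] [AddCommGroup L] [Module R L] [AddCommGroup E] [Module R E]
    [AddCommGroup Q] [Module R Q]
    (i : M →ₗ[R] L) (p : L →ₗ[R] E) (hi : Function.Injective i) (hp : Function.Surjective p)
    (hip : Function.Exact i p) (hT : Subsingleton ↥(tor1 R E Q)) :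
    Function.Injective (i.rTensor Q) := by
  let P : ProjectiveResolution (ModuleCat.of R Q) := projectiveResolution _
  have hz : Limits.IsZero (((((MonoidalCategory.tensoringLeft (ModuleCat R)).obj
      (ModuleCat.of R E)).mapHomologicalComplex _).obj P.complex).homology 1) :=
    (ModuleCat.isZero_of_subsingleton (tor1 R E Q)).of_iso (P.isoLeftDerivedObj _ 1).symm
  rw [← HomologicalComplex.exactAt_iff_isZero_homology,
    HomologicalComplex.exactAt_iff' _ 2 1 0 (by simp) (by simp),
    ShortComplex.ShortExact.moduleCat_exact_iff_function_exact] at hz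
  have h0 := (ShortComplex.ShortExact.moduleCat_exact_iff_function_exact _).1 P.exact₀
  have hs : Function.Surjective (P.π.f 0) := (ModuleCat.epi_iff_surjective _).1 inferInstance
  have : Module.Projective R (P.complex.X 0) := (P.complex.X 0).projective_of_module_projective
  refine rTensor_inj_aux (Q := Q) i p hi hp hip (P.complex.d 2 1).hom (P.complex.d 1 0).hom
    (P.π.f 0).hom ?_ hs h0 hz
  rw [← ModuleCat.hom_comp, P.complex.d_comp_d]
  rfl

theorem baseChange_bij {R R' : Type} [CommRing R] [Ring R'] [Algebra R R'] {M L E : Type}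
    [AddCommGroup M] [Module R M] [AddCommGroup L] [Module R L] [AddCommGroup E] [Module R E]
    (i : M →ₗ[R] L) (p : L →ₗ[R] E) (hi : Function.Injective i) (hp : Function.Surjective p)
    (hip : LinearMap.range i = LinearMap.ker p) (h0 : Subsingleton (R' ⊗[R] E))
    (hT : Subsingleton ↥(tor1 R E R')) :
    Function.Bijective (i.baseChange R') := by
  have hex : Function.Exact i p := LinearMap.exact_iff.2 hip.symm
  refine ⟨?_, fun x => (lTensor_exact R' hex hp x).1 (Subsingleton.elim _ _)⟩
  exact (i.lTensor_inj_iff_rTensor_inj R').2 (rTensor_inj_of_tor1 i p hi hp hex hT)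

/-- Let `R'` be an `R`-algebra and `M`, `N` finitely presented
`R`-modules admitting short exact sequences `0 → M → L → E → 0`, `0 → N → L → F → 0`
with common middle term, where `E ⊗_R R' = 0 = Tor₁^R(E, R')` and
`F ⊗_R R' = 0 = Tor₁^R(F, R')`.  Then `M ⊗_R R' ≅ N ⊗_R R'` as `R'`-modules. -/
theorem stmt6 {R R' : Type} [CommRing R] [Ring R'] [Algebra R R']
    {M N L E F : Type} [AddCommGroup M] [Module R M] [AddCommGroup N] [Module R N]
    [AddCommGroup L] [Module R L] [AddCommGroup E] [Module R E] [AddCommGroup F] [Module R F]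
    (hM : Module.FinitePresentation R M) (hN : Module.FinitePresentation R N)
    (iM : M →ₗ[R] L) (pE : L →ₗ[R] E)
    (hiM : Function.Injective iM) (hpE : Function.Surjective pE)
    (hME : LinearMap.range iM = LinearMap.ker pE)
    (iN : N →ₗ[R] L) (pF : L →ₗ[R] F)
    (hiN : Function.Injective iN) (hpF : Function.Surjective pF)
    (hNF : LinearMap.range iN = LinearMap.ker pF)
    (hE0 : Subsingleton (R' ⊗[R] E)) (hE1 : Subsingleton ↥(tor1 R E R'))
    (hF0 : Subsingleton (R' ⊗[R] F)) (hF1 : Subsingleton ↥(tor1 R F R')) :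
    Nonempty ((R' ⊗[R] M) ≃ₗ[R'] (R' ⊗[R] N)) := by
  exact ⟨(LinearEquiv.ofBijective _ (baseChange_bij iM pE hiM hpE hME hE0 hE1)).trans
    (LinearEquiv.ofBijective _ (baseChange_bij iN pF hiN hpF hNF hF0 hF1)).symm⟩
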